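/- Let μ be a probability measure on a measurable space Ω and let A, B, C be events with μ(A) > 0 and μ(B) > 0 (hence μ(A ∪ B) > 0). Set x = p(C|B), y = p(B|A), t = p(A|A ∪ B), and z = p(C|A). Then z ≤ (1 − x)(1 − y) + x/t; in particular z ≤ min{1, (1 − x)(1 − y) + x/t}. (Upper probability bound of the Weak Transitivity propagation rule, Theorem 3 of the paper, for the case t > 0.) -/

import Mathlib

open MeasureTheory

/-- Conditional probability `p(E|H) = μ(E ∩ H) / μ(H)` as a real number. -/
noncomputable def condProb {Ω : Type*} [MeasurableSpace Ω] (μ : Measure Ω) (E H : Set Ω) : ℝ :=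
  (μ (E ∩ H)).toReal / (μ H).toReal

/-!
Split `A ∩ C` along `B`: since `A ∩ C ⊆ (A \ B) ∪ (B ∩ C)`, dividing by `μ(A)` gives
`z ≤ (1 - y) + x * μ(B) / μ(A)`. Also `μ(A ∪ B) = μ(A \ B) + μ(B)`, so that
`1 / t = (1 - y) + μ(B) / μ(A)`, and eliminating `μ(B) / μ(A)` gives
`z ≤ (1 - y) + x * (1 / t - (1 - y))`.
-/

open scoped ENNReal

section

variable {Ω : Type*} [MeasurableSpace Ω] {μ : Measure Ω} {A B C E H : Set Ω}

theorem condProb_eq_measureReal_div :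
    condProb μ E H = μ.real (E ∩ H) / μ.real H :=
  rfl

theorem condProb_le_one (hH : μ H ≠ ∞) : condProb μ E H ≤ 1 :=
  div_le_one_of_le₀ (measureReal_mono Set.inter_subset_right hH) measureReal_nonneg

theorem condProb_mul_measureReal (hH : μ.real H ≠ 0) :
    condProb μ E H * μ.real H = μ.real (E ∩ H) :=
  div_mul_cancel₀ _ hH

theorem condProb_compl (hE : NullMeasurableSet E μ) (hH : μ.real H ≠ 0) :
    condProb μ Eᶜ H = 1 - condProb μ E H := by
  have hH_top : μ H ≠ ∞ := (ENNReal.toReal_ne_zero.mp hH).2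
  have hsplit : μ.real (E ∩ H) + μ.real (Eᶜ ∩ H) = μ.real H := by
    rw [Set.inter_comm E, Set.inter_comm Eᶜ, ← Set.sdiff_eq]
    exact measureReal_inter_add_sdiff₀ hE hH_top
  rw [eq_sub_iff_add_eq', condProb_eq_measureReal_div, condProb_eq_measureReal_div, ← add_div,
    hsplit, div_self hH]

theorem inv_condProb_left_union (hB : NullMeasurableSet B μ) (hA_top : μ A ≠ ∞)
    (hB_top : μ B ≠ ∞) :
    (condProb μ A (A ∪ B))⁻¹ = condProb μ Bᶜ A + μ.real B / μ.real A := by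
  have hunion : μ.real (A ∪ B) = μ.real (Bᶜ ∩ A) + μ.real B := by
    rw [Set.inter_comm, ← Set.sdiff_eq, ← Set.sdiff_union_self]
    exact measureReal_union₀ hB Set.disjoint_sdiff_left.aedisjoint
      (measure_ne_top_of_subset Set.sdiff_subset hA_top) hB_top
  rw [condProb_eq_measureReal_div, Set.inter_eq_left.mpr Set.subset_union_left, inv_div, hunion,
    add_div, condProb_eq_measureReal_div]

theorem condProb_le_condProb_compl_add (hA_top : μ A ≠ ∞) (hB : μ.real B ≠ 0) :
    condProb μ C A ≤ condProb μ Bᶜ A + condProb μ C B * (μ.real B / μ.real A) := by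
  have hB_top : μ B ≠ ∞ := (ENNReal.toReal_ne_zero.mp hB).2
  have hsub : C ∩ A ⊆ Bᶜ ∩ A ∪ C ∩ B := by
    rintro ω ⟨hωC, hωA⟩
    by_cases hωB : ω ∈ B
    · exact Or.inr ⟨hωC, hωB⟩
    · exact Or.inl ⟨hωB, hωA⟩
  have hle : μ.real (C ∩ A) ≤ μ.real (Bᶜ ∩ A) + μ.real (C ∩ B) :=
    (measureReal_mono hsub (measure_union_ne_top
      (measure_ne_top_of_subset Set.inter_subset_right hA_top)
      (measure_ne_top_of_subset Set.inter_subset_right hB_top))).trans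
      (measureReal_union_le _ _)
  calc condProb μ C A = μ.real (C ∩ A) / μ.real A := condProb_eq_measureReal_div
    _ ≤ (μ.real (Bᶜ ∩ A) + μ.real (C ∩ B)) / μ.real A := by gcongr
    _ = condProb μ Bᶜ A + condProb μ C B * (μ.real B / μ.real A) := by
      rw [add_div, ← condProb_eq_measureReal_div, ← mul_div_assoc, condProb_mul_measureReal hB]

-- `μ.real A ≠ 0` means `0 < μ A < ∞`, because `μ.real` sends infinite measure to `0`.
theorem weak_transitivity_upper_bound_general (hB : NullMeasurableSet B μ)
    (hA_ne : μ.real A ≠ 0) (hB_ne : μ.real B ≠ 0) :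
    condProb μ C A ≤
      min 1 ((1 - condProb μ C B) * (1 - condProb μ B A) +
        condProb μ C B / condProb μ A (A ∪ B)) := by
  have hA_top : μ A ≠ ∞ := (ENNReal.toReal_ne_zero.mp hA_ne).2
  have hB_top : μ B ≠ ∞ := (ENNReal.toReal_ne_zero.mp hB_ne).2
  refine le_min (condProb_le_one hA_top) ?_
  calc condProb μ C A
      ≤ condProb μ Bᶜ A + condProb μ C B * (μ.real B / μ.real A) :=
        condProb_le_condProb_compl_add hA_top hB_ne
    _ = (1 - condProb μ C B) * condProb μ Bᶜ A +
          condProb μ C B * (condProb μ Bᶜ A + μ.real B / μ.real A) := by ring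
    _ = (1 - condProb μ C B) * (1 - condProb μ B A) +
          condProb μ C B / condProb μ A (A ∪ B) := by
      rw [← inv_condProb_left_union hB hA_top hB_top, condProb_compl hB hA_ne, div_eq_mul_inv]

end

theorem weak_transitivity_upper_bound {Ω : Type*} [MeasurableSpace Ω]
    (μ : Measure Ω) [IsProbabilityMeasure μ] (A B C : Set Ω)
    (hA : MeasurableSet A) (hB : MeasurableSet B) (hC : MeasurableSet C)
    (hApos : 0 < μ A) (hBpos : 0 < μ B)
    (x y t z : ℝ)
    (hx : x = condProb μ C B) (hy : y = condProb μ B A)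
    (ht : t = condProb μ A (A ∪ B)) (hz : z = condProb μ C A) :
    z ≤ (1 - x) * (1 - y) + x / t ∧
      z ≤ min 1 ((1 - x) * (1 - y) + x / t) := by
  have hbound := weak_transitivity_upper_bound_general (C := C) hB.nullMeasurableSet
    (ENNReal.toReal_ne_zero.mpr ⟨hApos.ne', measure_ne_top μ A⟩)
    (ENNReal.toReal_ne_zero.mpr ⟨hBpos.ne', measure_ne_top μ B⟩)
  rw [← hx, ← hy, ← ht, ← hz] at hbound
  exact ⟨hbound.trans (min_le_right _ _), hbound⟩
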